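/- arXiv:2307.10446 — 4 statements merged into one kernel-verified Lean document; each statement's English description precedes it below -/
import Mathlib

section
/- Let X be a set and let k : X × X → ℂ be a positive definite kernel such that for all x ≠ y in X the functions k(·,x) and k(·,y) on X are not identically equal. Then the function d_k(x,y) = sqrt(k(x,x).re + k(y,y).re − 2·(k(x,y)).re) is a metric on X: it is nonnegative, d_k(x,y) = 0 if and only if x = y, d_k(x,y) = d_k(y,x), and d_k(x,y) ≤ d_k(x,z) + d_k(z,y) for all x,y,z ∈ X. -/
open Complex Finset

/-- A kernel `k : X → X → ℂ` is positive definite if every finite quadratic form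
`∑_{j,i} conj (c i) * k (x i) (x j) * c j` is a nonnegative real number. -/
def IsPositiveDefiniteKernel {X : Type*} (k : X → X → ℂ) : Prop :=
  ∀ (N : ℕ) (x : Fin N → X) (c : Fin N → ℂ),
    (∑ j, ∑ i, (starRingEnd ℂ) (c i) * k (x i) (x j) * c j).im = 0 ∧
    0 ≤ (∑ j, ∑ i, (starRingEnd ℂ) (c i) * k (x i) (x j) * c j).re

theorem pdk_herm {X : Type*} {k : X → X → ℂ} (hpd : IsPositiveDefiniteKernel k) (x y : X) :
    (k y x).re = (k x y).re ∧ (k y x).im = -(k x y).im ∧ (k x x).im = 0 := by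
  have hx := (hpd 1 ![x] ![1]).1
  have hy := (hpd 1 ![y] ![1]).1
  have h1 := (hpd 2 ![x, y] ![1, 1]).1
  have h2 := (hpd 2 ![x, y] ![1, I]).1
  simp [Fin.sum_univ_two] at hx hy h1 h2
  refine ⟨by linarith, by linarith, hx⟩

theorem pdk_three {X : Type*} {k : X → X → ℂ} (hpd : IsPositiveDefiniteKernel k) (x y z : X)
    (a b : ℝ) (w : ℂ) :
    0 ≤ a ^ 2 * (k x x).re + b ^ 2 * (k y y).re + (w.re ^ 2 + w.im ^ 2) * (k z z).re
      + 2 * a * b * (k x y).re + 2 * a * (w.re * (k x z).re - w.im * (k x z).im)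
      + 2 * b * (w.re * (k y z).re - w.im * (k y z).im) := by
  have h := (hpd 3 ![x, y, z] ![(a : ℂ), (b : ℂ), w]).2
  obtain ⟨h1, h2, h3⟩ := pdk_herm hpd x y
  obtain ⟨h4, h5, h6⟩ := pdk_herm hpd x z
  obtain ⟨h7, h8, h9⟩ := pdk_herm hpd y z
  obtain ⟨-, -, h10⟩ := pdk_herm hpd z z
  simp [Fin.sum_univ_three, h1, h2, h3, h4, h5, h6, h7, h8, h9, h10] at h
  linarith

theorem affine_zero {b c : ℝ} (h : ∀ r : ℝ, 0 ≤ r * b + c) : b = 0 := by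
  by_contra hb
  have := h ((-c - 1) / b)
  rw [div_mul_cancel₀ _ hb] at this
  linarith

theorem dk_is_metric {X : Type*} (k : X → X → ℂ)
    (hpd : IsPositiveDefiniteKernel k)
    (hsep : ∀ x y : X, x ≠ y → (fun z => k z x) ≠ (fun z => k z y)) :
    ∀ x y z : X,
      0 ≤ Real.sqrt ((k x x).re + (k y y).re - 2 * (k x y).re) ∧
      (Real.sqrt ((k x x).re + (k y y).re - 2 * (k x y).re) = 0 ↔ x = y) ∧
      Real.sqrt ((k x x).re + (k y y).re - 2 * (k x y).re) =
        Real.sqrt ((k y y).re + (k x x).re - 2 * (k y x).re) ∧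
      Real.sqrt ((k x x).re + (k y y).re - 2 * (k x y).re) ≤
        Real.sqrt ((k x x).re + (k z z).re - 2 * (k x z).re) +
        Real.sqrt ((k z z).re + (k y y).re - 2 * (k z y).re) := by
  intro x y z
  have hs := (pdk_herm hpd x y).1
  have hnn : ∀ x y : X, 0 ≤ (k x x).re + (k y y).re - 2 * (k x y).re := by
    intro x y
    have := pdk_three hpd x y y 1 (-1) 0
    simp at this
    linarith
  refine ⟨Real.sqrt_nonneg _, ⟨?_, ?_⟩, ?_, ?_⟩
  · intro h
    rw [Real.sqrt_eq_zero (hnn x y)] at h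
    by_contra hne
    apply hsep x y hne
    funext u
    obtain ⟨h1, h2, -⟩ := pdk_herm hpd x u
    obtain ⟨h3, h4, -⟩ := pdk_herm hpd y u
    have e1 : (k x u).re - (k y u).re = 0 := by
      apply affine_zero (c := (k u u).re)
      intro r
      have := pdk_three hpd x y u (r / 2) (-(r / 2)) 1
      simp at this
      have e : (r / 2) ^ 2 * ((k x x).re + (k y y).re - 2 * (k x y).re) = 0 := by rw [h, mul_zero]
      linarith
    have e2 : (k x u).im - (k y u).im = 0 := by
      apply affine_zero (c := (k u u).re)
      intro r
      have := pdk_three hpd x y u (-(r / 2)) (r / 2) I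
      simp at this
      have e : (r / 2) ^ 2 * ((k x x).re + (k y y).re - 2 * (k x y).re) = 0 := by rw [h, mul_zero]
      linarith
    apply Complex.ext
    · change (k u x).re = (k u y).re
      linarith
    · change (k u x).im = (k u y).im
      linarith
  · rintro rfl
    rw [Real.sqrt_eq_zero (hnn x x)]
    ring
  · rw [hs, add_comm]
  · have hA := hnn x z
    have hB := hnn z y
    have hzy := (pdk_herm hpd y z).1
    set A := (k x x).re + (k z z).re - 2 * (k x z).re with hAd
    set B := (k z z).re + (k y y).re - 2 * (k z y).re with hBd
    set D := (k x x).re + (k y y).re - 2 * (k x y).re with hDd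
    have hd : discrim A (D - A - B) B ≤ 0 := by
      apply discrim_le_zero
      intro s
      have := pdk_three hpd x y z s (-1) ((1 - s : ℝ) : ℂ)
      simp only [ofReal_re, ofReal_im] at this
      rw [hDd, hAd, hBd, hzy]
      linarith
    unfold discrim at hd
    have hm : D - A - B ≤ 2 * (√A * √B) := by
      apply le_of_abs_le
      apply abs_le_of_sq_le_sq _ (by positivity)
      rw [mul_pow, mul_pow, Real.sq_sqrt hA, Real.sq_sqrt hB]
      linarith
    apply Real.sqrt_le_iff.2 ⟨by positivity, ?_⟩
    rw [add_sq, Real.sq_sqrt hA, Real.sq_sqrt hB]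
    linarith
end

section
/- Let H be a complex (or real) Hilbert space and let a ∈ (0,1). Then the kernel d(x,y) = ‖x−y‖^{2a} is negative definite on H. -/
open Complex Finset

/-- A (real-valued, symmetric) kernel `d : X → X → ℝ` is negative definite if it is symmetric
and every finite quadratic form `∑_{j,i} conj (c i) * d (x i) (x j) * c j` with complex
coefficients summing to zero is a real number `≤ 0`. -/
def IsNegativeDefiniteKernelR {X : Type*} (d : X → X → ℝ) : Prop :=
  (∀ x y : X, d y x = d x y) ∧
  ∀ (N : ℕ) (x : Fin N → X) (c : Fin N → ℂ), (∑ j, c j) = 0 →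
    (∑ j, ∑ i, (starRingEnd ℂ) (c i) * (d (x i) (x j) : ℂ) * c j).im = 0 ∧
    (∑ j, ∑ i, (starRingEnd ℂ) (c i) * (d (x i) (x j) : ℂ) * c j).re ≤ 0

theorem dpnd_pow {E : Type*} [NormedAddCommGroup E] [InnerProductSpace ℝ E] {N : ℕ}
    (x : Fin N → E) (n : ℕ) :
    (Matrix.of fun i j => (inner ℝ (x i) (x j)) ^ n : Matrix (Fin N) (Fin N) ℝ).PosSemidef := by
  induction n with
  | zero =>
    have h := Matrix.posSemidef_vecMulVec_self_star (fun _ : Fin N => (1 : ℝ))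
    convert h using 1
    ext i j
    simp [Matrix.vecMulVec]
  | succ k ih =>
    have h := ih.hadamard (Matrix.posSemidef_gram ℝ x)
    have e : (Matrix.of fun i j => (inner ℝ (x i) (x j)) ^ (k + 1) : Matrix (Fin N) (Fin N) ℝ) =
        Matrix.hadamard (Matrix.of fun i j => (inner ℝ (x i) (x j)) ^ k) (Matrix.gram ℝ x) := by
      ext i j
      simp [pow_succ]
    rw [e]
    exact h

theorem dpnd_pow_sum {E : Type*} [NormedAddCommGroup E] [InnerProductSpace ℝ E] {N : ℕ}
    (x : Fin N → E) (b : Fin N → ℝ) (n : ℕ) :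
    0 ≤ ∑ i, ∑ j, b i * b j * (inner ℝ (x i) (x j)) ^ n := by
  have h := (dpnd_pow x n).dotProduct_mulVec_nonneg b
  refine h.trans_eq ?_
  simp only [dotProduct, Matrix.mulVec, Finset.mul_sum, Matrix.of_apply]
  refine Finset.sum_congr rfl fun i _ => Finset.sum_congr rfl fun j _ => ?_
  simp
  ring

theorem dpnd_exp_inner {E : Type*} [NormedAddCommGroup E] [InnerProductSpace ℝ E] {N : ℕ}
    (x : Fin N → E) (b : Fin N → ℝ) (u : ℝ) (hu : 0 ≤ u) :
    0 ≤ ∑ i, ∑ j, b i * b j * Real.exp (u * inner ℝ (x i) (x j)) := by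
  have h : HasSum (fun n : ℕ => ∑ i, ∑ j,
      b i * b j * ((u * inner ℝ (x i) (x j)) ^ n / (n.factorial : ℝ)))
      (∑ i, ∑ j, b i * b j * Real.exp (u * inner ℝ (x i) (x j))) := by
    refine hasSum_sum fun i _ => hasSum_sum fun j _ => HasSum.mul_left _ ?_
    rw [Real.exp_eq_exp_ℝ]
    exact NormedSpace.expSeries_div_hasSum_exp _
  refine h.nonneg fun n => ?_
  have e : ∑ i, ∑ j, b i * b j * ((u * inner ℝ (x i) (x j)) ^ n / (n.factorial : ℝ))
      = u ^ n / (n.factorial : ℝ) * ∑ i, ∑ j, b i * b j * (inner ℝ (x i) (x j)) ^ n := by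
    simp only [Finset.mul_sum]
    refine Finset.sum_congr rfl fun i _ => Finset.sum_congr rfl fun j _ => ?_
    rw [mul_pow]; ring
  rw [e]
  exact mul_nonneg (by positivity) (dpnd_pow_sum x b n)

theorem dpnd_gauss {E : Type*} [NormedAddCommGroup E] [InnerProductSpace ℝ E] {N : ℕ}
    (x : Fin N → E) (b : Fin N → ℝ) (u : ℝ) (hu : 0 ≤ u) :
    0 ≤ ∑ i, ∑ j, b i * b j * Real.exp (-(u * ‖x i - x j‖ ^ 2)) := by
  have h := dpnd_exp_inner x (fun i => b i * Real.exp (-(u * ‖x i‖ ^ 2))) (2 * u) (by positivity)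
  refine h.trans_eq (Finset.sum_congr rfl fun i _ => Finset.sum_congr rfl fun j _ => ?_)
  rw [norm_sub_sq_real]
  have : -(u * (‖x i‖ ^ 2 - 2 * inner ℝ (x i) (x j) + ‖x j‖ ^ 2)) =
    -(u * ‖x i‖ ^ 2) + -(u * ‖x j‖ ^ 2) + 2 * u * inner ℝ (x i) (x j) := by ring
  rw [this, Real.exp_add, Real.exp_add]
  ring

theorem dpnd_inv {E : Type*} [NormedAddCommGroup E] [InnerProductSpace ℝ E] {N : ℕ}
    (x : Fin N → E) (b : Fin N → ℝ) (t : ℝ) (ht : 0 < t) :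
    0 ≤ ∑ i, ∑ j, b i * b j * (t + ‖x i - x j‖ ^ 2)⁻¹ := by
  have key : ∀ s : ℝ, 0 < s → MeasureTheory.IntegrableOn (fun u => Real.exp (-s * u)) (Set.Ioi 0) ∧
      ∫ u in Set.Ioi (0 : ℝ), Real.exp (-s * u) = s⁻¹ := by
    intro s hs
    refine ⟨integrableOn_exp_mul_Ioi (by linarith) 0, ?_⟩
    rw [integral_exp_mul_Ioi (by linarith) 0]
    simp
  have hp : ∀ i j, 0 < t + ‖x i - x j‖ ^ 2 := fun i j => by positivity
  have e : ∑ i, ∑ j, b i * b j * (t + ‖x i - x j‖ ^ 2)⁻¹ =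
      ∫ u in Set.Ioi (0 : ℝ), ∑ i, ∑ j, b i * b j * Real.exp (-(t + ‖x i - x j‖ ^ 2) * u) := by
    rw [MeasureTheory.integral_finsetSum _ fun i _ => MeasureTheory.integrable_finsetSum _
      fun j _ => ((key _ (hp i j)).1.const_mul _)]
    refine Finset.sum_congr rfl fun i _ => ?_
    rw [MeasureTheory.integral_finsetSum _ fun j _ => ((key _ (hp i j)).1.const_mul _)]
    refine Finset.sum_congr rfl fun j _ => ?_
    rw [MeasureTheory.integral_const_mul, (key _ (hp i j)).2]
  rw [e]
  refine MeasureTheory.setIntegral_nonneg measurableSet_Ioi fun u hu => ?_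
  have h := mul_nonneg (Real.exp_pos (-(t * u))).le (dpnd_gauss x b u (le_of_lt hu))
  simp only [Finset.mul_sum] at h
  refine h.trans_eq (Finset.sum_congr rfl fun i _ => Finset.sum_congr rfl fun j _ => ?_)
  have : -(t + ‖x i - x j‖ ^ 2) * u = -(t * u) + -(u * ‖x i - x j‖ ^ 2) := by ring
  rw [this, Real.exp_add]
  ring

theorem dpnd_real {E : Type*} [NormedAddCommGroup E] [InnerProductSpace ℝ E] {N : ℕ}
    (x : Fin N → E) (b : Fin N → ℝ) (hb : ∑ i, b i = 0) (a : ℝ) (ha : a ∈ Set.Ioo (0 : ℝ) 1) :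
    ∑ i, ∑ j, b i * b j * ‖x i - x j‖ ^ (2 * a) ≤ 0 := by
  obtain ⟨μ, hμ⟩ := Real.exists_measure_rpow_eq_integral_rpowIntegrand₀₁ ha
  have hx : ∀ i j, (0 : ℝ) ≤ ‖x i - x j‖ ^ 2 := fun i j => by positivity
  have e : ∑ i, ∑ j, b i * b j * ‖x i - x j‖ ^ (2 * a) =
      ∫ t in Set.Ioi (0 : ℝ), ∑ i, ∑ j,
        b i * b j * Real.rpowIntegrand₀₁ a t (‖x i - x j‖ ^ 2) ∂μ := by
    rw [MeasureTheory.integral_finsetSum _ fun i _ => MeasureTheory.integrable_finsetSum _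
      fun j _ => ((hμ _ (hx i j)).1.const_mul _)]
    refine Finset.sum_congr rfl fun i _ => ?_
    rw [MeasureTheory.integral_finsetSum _ fun j _ => ((hμ _ (hx i j)).1.const_mul _)]
    refine Finset.sum_congr rfl fun j _ => ?_
    rw [MeasureTheory.integral_const_mul, ← (hμ _ (hx i j)).2, Real.rpow_mul (norm_nonneg _)]
    norm_num
  rw [e]
  refine MeasureTheory.setIntegral_nonpos measurableSet_Ioi fun t ht => ?_
  have ht' : 0 < t := ht
  have h := mul_nonneg (Real.rpow_nonneg ht'.le a) (dpnd_inv x b t ht')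
  have hz : ∑ i, ∑ j, b i * b j = 0 := by
    rw [← Finset.sum_mul_sum, hb, zero_mul]
  have : ∑ i, ∑ j, b i * b j * Real.rpowIntegrand₀₁ a t (‖x i - x j‖ ^ 2) =
      t ^ a * t⁻¹ * (∑ i, ∑ j, b i * b j) -
      t ^ a * ∑ i, ∑ j, b i * b j * (t + ‖x i - x j‖ ^ 2)⁻¹ := by
    simp only [Finset.mul_sum, ← Finset.sum_sub_distrib]
    refine Finset.sum_congr rfl fun i _ => Finset.sum_congr rfl fun j _ => ?_
    rw [Real.rpowIntegrand₀₁]; ring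
  rw [this, hz]
  linarith

theorem dist_pow_negative_definite {H : Type*} [NormedAddCommGroup H]
    [InnerProductSpace ℂ H] [CompleteSpace H] (a : ℝ) (ha : a ∈ Set.Ioo (0 : ℝ) 1) :
    IsNegativeDefiniteKernelR (fun x y : H => ‖x - y‖ ^ (2 * a)) := by
  letI : InnerProductSpace ℝ H := InnerProductSpace.rclikeToReal ℂ H
  refine ⟨fun x y => by simp only [norm_sub_rev], fun N x c hc => ⟨?_, ?_⟩⟩
  · rw [← Complex.conj_eq_iff_im]
    simp only [map_sum, map_mul, Complex.conj_conj, Complex.conj_ofReal]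
    rw [Finset.sum_comm]
    refine Finset.sum_congr rfl fun i _ => Finset.sum_congr rfl fun j _ => ?_
    rw [norm_sub_rev]
    ring
  · have h1 := dpnd_real x (fun i => (c i).re) (by rw [← Complex.re_sum, hc]; rfl) a ha
    have h2 := dpnd_real x (fun i => (c i).im) (by rw [← Complex.im_sum, hc]; rfl) a ha
    refine le_of_eq_of_le ?_ (add_nonpos h1 h2)
    rw [Finset.sum_comm]
    simp only [Complex.re_sum, ← Finset.sum_add_distrib]
    refine Finset.sum_congr rfl fun i _ => Finset.sum_congr rfl fun j _ => ?_
    simp only [Complex.mul_re, Complex.mul_im, Complex.conj_re, Complex.conj_im,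
      Complex.ofReal_re, Complex.ofReal_im]
    ring
end

section
/- (Schoenberg's theorem) Let X be a set and let d : X × X → ℂ be a hermitian kernel (d(y,x) = conj(d(x,y)) for all x,y). Then d is negative definite if and only if for every t > 0 the kernel (x,y) ↦ exp(−t·d(x,y)) is positive definite on X. -/
open Complex Finset

/-- A kernel `d : X → X → ℂ` is negative definite if it is hermitian and every finite
quadratic form `∑_{j,i} conj (c i) * d (x i) (x j) * c j` with coefficients summing to zero
is a real number `≤ 0`. -/
def IsNegativeDefiniteKernel {X : Type*} (d : X → X → ℂ) : Prop :=
  (∀ x y : X, d y x = (starRingEnd ℂ) (d x y)) ∧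
  ∀ (N : ℕ) (x : Fin N → X) (c : Fin N → ℂ), (∑ j, c j) = 0 →
    (∑ j, ∑ i, (starRingEnd ℂ) (c i) * d (x i) (x j) * c j).im = 0 ∧
    (∑ j, ∑ i, (starRingEnd ℂ) (c i) * d (x i) (x j) * c j).re ≤ 0

open scoped ComplexOrder in
theorem qf_nonneg_iff (z : ℂ) : (z.im = 0 ∧ 0 ≤ z.re) ↔ 0 ≤ z := by
  rw [Complex.nonneg_iff, and_comm, eq_comm]

open scoped ComplexOrder in
theorem posSemidef_iff_qf {N : ℕ} (M : Matrix (Fin N) (Fin N) ℂ) (hM : M.IsHermitian) :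
    M.PosSemidef ↔ ∀ c : Fin N → ℂ, 0 ≤ ∑ j, ∑ i, (starRingEnd ℂ) (c i) * M i j * c j := by
  have key : ∀ c : Fin N → ℂ, star c ⬝ᵥ (M.mulVec c) =
      ∑ j, ∑ i, (starRingEnd ℂ) (c i) * M i j * c j := by
    intro c
    rw [Finset.sum_comm]
    simp only [dotProduct, Matrix.mulVec, Finset.mul_sum, Pi.star_apply, mul_assoc]
    rfl
  rw [Matrix.posSemidef_iff_dotProduct_mulVec]
  simp only [key]
  exact ⟨fun h => h.2, fun h => ⟨hM, h⟩⟩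

open scoped ComplexOrder in
theorem posSemidef_pow {N : ℕ} (M : Matrix (Fin N) (Fin N) ℂ) (hM : M.PosSemidef) (n : ℕ) :
    (Matrix.of fun i j => M i j ^ n).PosSemidef := by
  induction n with
  | zero =>
    rw [posSemidef_iff_qf]
    · intro c
      have : ∑ j, ∑ i, (starRingEnd ℂ) (c i) * (Matrix.of fun i j => M i j ^ 0) i j * c j
          = star (∑ i, c i) * (∑ i, c i) := by
        simp [Finset.sum_mul, Finset.mul_sum]
      rw [this]
      exact star_mul_self_nonneg _
    · ext i j
      simp
  | succ n ih =>
    have e : (Matrix.of fun i j => M i j ^ (n + 1)) =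
        (Matrix.of fun i j => M i j ^ n).hadamard M := by
      ext i j
      simp [Matrix.hadamard, pow_succ]
    rw [e]
    exact ih.hadamard hM

open scoped ComplexOrder in
theorem exp_qf_nonneg {N : ℕ} (M : Matrix (Fin N) (Fin N) ℂ) (hM : M.PosSemidef)
    (c : Fin N → ℂ) :
    0 ≤ ∑ j, ∑ i, (starRingEnd ℂ) (c i) * Complex.exp (M i j) * c j := by
  have hs : HasSum (fun n : ℕ => ∑ j, ∑ i, (starRingEnd ℂ) (c i) * (M i j ^ n / (n.factorial : ℂ)) * c j)
      (∑ j, ∑ i, (starRingEnd ℂ) (c i) * Complex.exp (M i j) * c j) := by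
    refine hasSum_sum fun j _ => hasSum_sum fun i _ => ?_
    refine HasSum.mul_right _ (HasSum.mul_left _ ?_)
    rw [Complex.exp_eq_exp_ℂ]
    exact NormedSpace.expSeries_div_hasSum_exp (M i j)
  refine hs.nonneg fun n => ?_
  have h1 := posSemidef_pow M hM n
  have h2 := (posSemidef_iff_qf _ h1.1).1 h1 c
  have h3 : ∑ j, ∑ i, (starRingEnd ℂ) (c i) * (M i j ^ n / (n.factorial : ℂ)) * c j =
      (((n.factorial : ℝ)⁻¹ : ℝ) : ℂ) *
      ∑ j, ∑ i, (starRingEnd ℂ) (c i) * (Matrix.of fun i j => M i j ^ n) i j * c j := by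
    simp only [Finset.mul_sum, Matrix.of_apply]
    refine Finset.sum_congr rfl fun j _ => Finset.sum_congr rfl fun i _ => ?_
    push_cast
    ring
  rw [h3]
  refine mul_nonneg ?_ h2
  exact Complex.zero_le_real.2 (by positivity)

open scoped ComplexOrder in
theorem schoenberg_forward {X : Type*} (d : X → X → ℂ)
    (hherm : ∀ x y : X, d y x = (starRingEnd ℂ) (d x y))
    (h : IsNegativeDefiniteKernel d) (t : ℝ) (ht : 0 < t) :
    IsPositiveDefiniteKernel (fun x y : X => Complex.exp (-(t : ℂ) * d x y)) := by
  intro N x c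
  rw [qf_nonneg_iff]
  rcases N with _ | n
  · simp
  generalize hN : n + 1 = N at *
  have z : X := x ⟨0, by omega⟩
  set A : Matrix (Fin N) (Fin N) ℂ :=
    Matrix.of fun i j => (t : ℂ) * (d (x i) z + d z (x j) - d (x i) (x j) - d z z) with hA
  have hAh : A.IsHermitian := by
    ext i j
    simp only [hA, Matrix.conjTranspose_apply, Matrix.of_apply, star_mul', star_sub, star_add]
    have e : ∀ a b, star (d a b) = d b a := fun a b => (hherm a b).symm
    simp only [e]
    have : star (t : ℂ) = t := Complex.conj_ofReal t
    rw [this]; ring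
  have hAp : A.PosSemidef := by
    rw [posSemidef_iff_qf _ hAh]
    intro b
    have h1 := h.2 (N + 1) (Fin.cons z x) (Fin.cons (-∑ j, b j) b) (by simp [Fin.sum_univ_succ])
    have h2 : 0 ≤ -(∑ j, ∑ i, (starRingEnd ℂ) ((Fin.cons (-∑ j, b j) b : Fin (N+1) → ℂ) i) *
        d ((Fin.cons z x : Fin (N+1) → X) i) ((Fin.cons z x : Fin (N+1) → X) j) *
        (Fin.cons (-∑ j, b j) b : Fin (N+1) → ℂ) j) := by
      rw [← qf_nonneg_iff]
      refine ⟨by rw [Complex.neg_im, h1.1, neg_zero], by rw [Complex.neg_re]; linarith [h1.2]⟩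
    have h3 : ∑ j, ∑ i, (starRingEnd ℂ) (b i) * A i j * b j = (t : ℂ) * -(∑ j, ∑ i, (starRingEnd ℂ) ((Fin.cons (-∑ j, b j) b : Fin (N+1) → ℂ) i) *
        d ((Fin.cons z x : Fin (N+1) → X) i) ((Fin.cons z x : Fin (N+1) → X) j) *
        (Fin.cons (-∑ j, b j) b : Fin (N+1) → ℂ) j) := by
      have e1 : ∀ i j, (starRingEnd ℂ) (b i) * A i j * b j =
          (t : ℂ) * (((starRingEnd ℂ) (b i) * d (x i) z) * b j + (starRingEnd ℂ) (b i) * (d z (x j) * b j)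
            - (starRingEnd ℂ) (b i) * d (x i) (x j) * b j - (starRingEnd ℂ) (b i) * (d z z * b j)) := by
        intro i j
        simp only [hA, Matrix.of_apply]; ring
      simp only [e1, ← Finset.mul_sum, ← Finset.sum_mul, Finset.sum_add_distrib, Finset.sum_sub_distrib]
      simp only [Fin.sum_univ_succ, Fin.cons_zero, Fin.cons_succ, Finset.sum_add_distrib, map_neg,
        map_sum, neg_mul, mul_neg, ← Finset.sum_mul]
      simp only [add_mul, neg_mul, Finset.sum_add_distrib, Finset.sum_neg_distrib, mul_assoc,
        ← Finset.mul_sum]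
      ring
    rw [h3]
    exact mul_nonneg (Complex.zero_le_real.2 ht.le) h2
  have := exp_qf_nonneg A hAp (fun j => Complex.exp (-(t : ℂ) * (d z (x j) - d z z / 2)) * c j)
  refine this.trans_eq (Finset.sum_congr rfl fun j _ => Finset.sum_congr rfl fun i _ => ?_)
  rw [map_mul, ← Complex.exp_conj]
  have e : ∀ a b, (starRingEnd ℂ) (d a b) = d b a := fun a b => (hherm a b).symm
  simp only [map_mul, map_neg, map_sub, map_div₀, Complex.conj_ofReal, e, map_ofNat]
  have : -(t : ℂ) * d (x i) (x j) = -(t : ℂ) * (d (x i) z - d z z / 2) + A i j +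
      -(t : ℂ) * (d z (x j) - d z z / 2) := by
    simp only [hA, Matrix.of_apply]; ring
  rw [this, Complex.exp_add, Complex.exp_add]
  ring

open scoped ComplexOrder Topology in
theorem schoenberg_backward {X : Type*} (d : X → X → ℂ)
    (h : ∀ t : ℝ, 0 < t →
        IsPositiveDefiniteKernel (fun x y : X => Complex.exp (-(t : ℂ) * d x y)))
    (N : ℕ) (x : Fin N → X) (c : Fin N → ℂ) (hc : (∑ j, c j) = 0) :
    0 ≤ -∑ j, ∑ i, (starRingEnd ℂ) (c i) * d (x i) (x j) * c j := by
  set Q : ℝ → ℂ := fun t =>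
    ∑ j, ∑ i, (starRingEnd ℂ) (c i) * Complex.exp (-(t : ℂ) * d (x i) (x j)) * c j with hQ
  have hQ0 : Q 0 = 0 := by
    have : Q 0 = ∑ j, ∑ i, (starRingEnd ℂ) (c i) * c j := by simp [hQ]
    rw [this, Finset.sum_comm]
    simp only [← Finset.mul_sum, hc, mul_zero, Finset.sum_const_zero]
  have hder : HasDerivAt Q (-∑ j, ∑ i, (starRingEnd ℂ) (c i) * d (x i) (x j) * c j) 0 := by
    have e : -∑ j, ∑ i, (starRingEnd ℂ) (c i) * d (x i) (x j) * c j =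
        ∑ j, ∑ i, (starRingEnd ℂ) (c i) * (Complex.exp (-((0 : ℝ) : ℂ) * d (x i) (x j)) *
          (-1 * d (x i) (x j))) * c j := by
      simp [← Finset.sum_neg_distrib]
    rw [e]
    refine HasDerivAt.fun_sum fun j _ => HasDerivAt.fun_sum fun i _ => ?_
    refine HasDerivAt.mul_const (HasDerivAt.const_mul _ ?_) _
    refine HasDerivAt.cexp ?_
    refine HasDerivAt.mul_const ?_ _
    exact (Complex.ofRealCLM.hasDerivAt (x := (0 : ℝ))).fun_neg
  have ht := hder.tendsto_slope_zero_right
  refine ge_of_tendsto ht ?_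
  filter_upwards [self_mem_nhdsWithin] with t ht
  have ht' : (0 : ℝ) < t := ht
  rw [hQ0, sub_zero, zero_add, Complex.real_smul]
  refine mul_nonneg (Complex.zero_le_real.2 (inv_nonneg.2 ht'.le)) ?_
  exact (qf_nonneg_iff _).1 (h t ht' N x c)

theorem schoenberg {X : Type*} (d : X → X → ℂ)
    (hherm : ∀ x y : X, d y x = (starRingEnd ℂ) (d x y)) :
    IsNegativeDefiniteKernel d ↔
      ∀ t : ℝ, 0 < t →
        IsPositiveDefiniteKernel (fun x y : X => Complex.exp (-(t : ℂ) * d x y)) := by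
  refine ⟨fun h t ht => schoenberg_forward d hherm h t ht, fun h => ⟨hherm, fun N x c hc => ?_⟩⟩
  have := (qf_nonneg_iff _).2 (schoenberg_backward d h N x c hc)
  rw [Complex.neg_im, Complex.neg_re] at this
  exact ⟨by linarith [this.1], by linarith [this.2]⟩
end

section
/- The kernel S(x,y) = 1/(1 + ‖x−y‖) is positive definite on ℂⁿ, where ‖·‖ is the Euclidean norm. -/
open Finset Complex

/-- A (real-valued) kernel `k : X → X → ℝ` is positive definite if every finite quadratic
form `∑_{j,i} conj (c i) * k (x i) (x j) * c j` with complex coefficients is a nonnegative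
real number. -/
def IsPositiveDefiniteKernelR {X : Type*} (k : X → X → ℝ) : Prop :=
  ∀ (N : ℕ) (x : Fin N → X) (c : Fin N → ℂ),
    (∑ j, ∑ i, (starRingEnd ℂ) (c i) * (k (x i) (x j) : ℂ) * c j).im = 0 ∧
    0 ≤ (∑ j, ∑ i, (starRingEnd ℂ) (c i) * (k (x i) (x j) : ℂ) * c j).re

/-- Real positive semidefiniteness in terms of sums. -/
def RPsd {ι : Type*} [Fintype ι] (M : ι → ι → ℝ) : Prop :=
  (∀ i j, M i j = M j i) ∧ ∀ a : ι → ℝ, 0 ≤ ∑ i, ∑ j, a i * M i j * a j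

/-- Conditionally negative definite, with zero diagonal and nonnegative entries. -/
def RCnd {ι : Type*} [Fintype ι] (M : ι → ι → ℝ) : Prop :=
  (∀ i j, M i j = M j i) ∧ (∀ i, M i i = 0) ∧ (∀ i j, 0 ≤ M i j) ∧
    ∀ a : ι → ℝ, ∑ i, a i = 0 → ∑ i, ∑ j, a i * M i j * a j ≤ 0

lemma rpsd_iff {ι : Type*} [Fintype ι] (M : ι → ι → ℝ) :
    RPsd M ↔ (Matrix.of M).PosSemidef := by
  rw [Matrix.posSemidef_iff_dotProduct_mulVec]
  unfold RPsd
  refine and_congr ?_ ?_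
  · constructor
    · intro h
      ext i j
      simpa using h j i
    · intro h i j
      have := h.apply i j
      simpa using this.symm
  · refine forall_congr' fun a => ?_
    simp [dotProduct, Matrix.mulVec, Finset.mul_sum, mul_assoc]

lemma RPsd.mul {ι : Type*} [Fintype ι] {M K : ι → ι → ℝ} (hM : RPsd M) (hK : RPsd K) :
    RPsd (fun i j => M i j * K i j) := by
  rw [rpsd_iff] at *
  exact hM.hadamard hK

lemma rpsd_rank_one {ι : Type*} [Fintype ι] (v : ι → ℝ) : RPsd (fun i j => v i * v j) := by
  refine ⟨fun i j => mul_comm _ _, fun a => ?_⟩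
  have : ∑ i, ∑ j, a i * (v i * v j) * a j = (∑ i, a i * v i) * (∑ i, a i * v i) := by
    rw [Finset.sum_mul_sum]
    exact Finset.sum_congr rfl fun i _ => Finset.sum_congr rfl fun j _ => by ring
  rw [this]; exact mul_self_nonneg _

lemma RPsd.add {ι : Type*} [Fintype ι] {M K : ι → ι → ℝ} (hM : RPsd M) (hK : RPsd K) :
    RPsd (fun i j => M i j + K i j) := by
  refine ⟨fun i j => by beta_reduce; rw [hM.1, hK.1], fun a => ?_⟩
  have := add_nonneg (hM.2 a) (hK.2 a)
  simpa only [mul_add, add_mul, Finset.sum_add_distrib] using this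

lemma RPsd.smul {ι : Type*} [Fintype ι] {M : ι → ι → ℝ} (hM : RPsd M) {t : ℝ} (ht : 0 ≤ t) :
    RPsd (fun i j => t * M i j) := by
  refine ⟨fun i j => by beta_reduce; rw [hM.1], fun a => ?_⟩
  have := mul_nonneg ht (hM.2 a)
  simp only [Finset.mul_sum] at this
  refine this.trans_eq ?_
  exact Finset.sum_congr rfl fun i _ => Finset.sum_congr rfl fun j _ => by ring

lemma RPsd.pow {ι : Type*} [Fintype ι] {M : ι → ι → ℝ} (hM : RPsd M) (k : ℕ) :
    RPsd (fun i j => M i j ^ k) := by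
  induction k with
  | zero => simpa using rpsd_rank_one (fun _ : ι => (1 : ℝ))
  | succ k ih => simpa only [pow_succ] using ih.mul hM

lemma RPsd.inv_one_sub {ι : Type*} [Fintype ι] {M : ι → ι → ℝ} (hM : RPsd M)
    (h1 : ∀ i j, |M i j| < 1) : RPsd (fun i j => (1 - M i j)⁻¹) := by
  refine ⟨fun i j => by beta_reduce; rw [hM.1], fun a => ?_⟩
  have hs : HasSum (fun k => ∑ i, ∑ j, a i * M i j ^ k * a j)
      (∑ i, ∑ j, a i * (1 - M i j)⁻¹ * a j) := by
    refine hasSum_sum fun i _ => hasSum_sum fun j _ => ?_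
    exact ((hasSum_geometric_of_abs_lt_one (h1 i j)).mul_left _).mul_right _
  exact hs.nonneg fun k => (hM.pow k).2 a

/-- entries of a PSD matrix with diagonal below one. -/
lemma RPsd.two {ι : Type*} [Fintype ι] {M : ι → ι → ℝ} (hM : RPsd M) (i j : ι) :
    0 ≤ M i i + M j j + 2 * M i j := by
  classical
  have := hM.2 (fun k => (if k = i then 1 else 0) + (if k = j then 1 else 0))
  simp only [mul_add, add_mul, Finset.sum_add_distrib, ite_mul, mul_ite, mul_one, one_mul,
    zero_mul, mul_zero, Finset.sum_ite_eq', Finset.mem_univ, if_true] at this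
  linarith [hM.1 i j]

lemma RCnd.psd {ι : Type*} [Fintype ι] {M : ι → ι → ℝ} (hM : RCnd M) (o : ι) :
    RPsd (fun i j => M i o + M j o - M i j) := by
  classical
  obtain ⟨hs, hd, hn, hc⟩ := hM
  refine ⟨fun i j => by beta_reduce; rw [hs i j]; ring, fun a => ?_⟩
  set S := ∑ i, a i with hS
  have h := hc (fun i => a i - S * (if i = o then 1 else 0)) (by
    simp [Finset.sum_sub_distrib, hS])
  have e1 : ∑ i, ∑ j, (a i - S * (if i = o then 1 else 0)) * M i j *
      (a j - S * (if j = o then 1 else 0)) =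
      ∑ i, ∑ j, a i * M i j * a j - S * ∑ i, a i * M i o - S * ∑ i, a i * M i o := by
    have : ∀ i j, (a i - S * (if i = o then 1 else 0)) * M i j *
      (a j - S * (if j = o then 1 else 0)) = a i * M i j * a j
        - (if j = o then S * (a i * M i j) else 0) - (if i = o then S * (a j * M i j) else 0)
        + (if i = o then (if j = o then S * S * M i j else 0) else 0) := by
      intro i j
      split_ifs <;> ring
    simp only [this, Finset.sum_add_distrib, Finset.sum_sub_distrib]
    have h3 : ∑ i, ∑ j, (if i = o then S * (a j * M i j) else 0)
        = S * ∑ i, a i * M i o := by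
      rw [Finset.sum_comm]
      simp [Finset.mul_sum, hs o]
    rw [h3]
    have h4 : ∑ i, ∑ j, (if i = o then (if j = o then S * S * M i j else 0) else 0) = 0 := by
      rw [Finset.sum_comm]
      simp [hd]
    rw [h4]
    simp [Finset.mul_sum]
  have e2 : ∑ i, ∑ j, a i * (M i o + M j o - M i j) * a j =
      S * ∑ i, a i * M i o + S * ∑ i, a i * M i o - ∑ i, ∑ j, a i * M i j * a j := by
    have h1 : S * ∑ i, a i * M i o = ∑ i, ∑ j, a i * (a j * M j o) := by
      rw [hS, Finset.sum_mul_sum]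
    have h2 : S * ∑ i, a i * M i o = ∑ i, ∑ j, (a i * M i o) * a j := by
      rw [mul_comm, hS, Finset.sum_mul_sum]
    nth_rewrite 1 [h1]
    rw [h2, ← Finset.sum_add_distrib, ← Finset.sum_sub_distrib]
    refine Finset.sum_congr rfl fun i _ => ?_
    rw [← Finset.sum_add_distrib, ← Finset.sum_sub_distrib]
    exact Finset.sum_congr rfl fun j _ => by ring
  rw [e1] at h
  rw [e2]
  linarith

lemma RCnd.inv {ι : Type*} [Fintype ι] {M : ι → ι → ℝ} (hM : RCnd M) {c : ℝ} (hc : 0 < c) :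
    RPsd (fun i j => (c + M i j)⁻¹) := by
  rcases isEmpty_or_nonempty ι with he | ⟨⟨o⟩⟩
  · exact ⟨fun i => (IsEmpty.false i).elim, fun a => by simp⟩
  have hK := hM.psd o
  obtain ⟨hs, hd, hn, -⟩ := hM
  set A : ι → ℝ := fun i => c / 2 + M i o with hA
  have hA0 : ∀ i, 0 < 1 + A i := fun i => by have := hn i o; simp only [hA]; positivity
  have hB : RPsd (fun i j => (1 - A i) * (1 - A j) + 2 * (M i o + M j o - M i j)) :=
    (rpsd_rank_one (fun i => 1 - A i)).add (hK.smul (by norm_num))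
  have hC := (rpsd_rank_one (fun i => (1 + A i)⁻¹)).mul hB
  set C : ι → ι → ℝ := fun i j => (1 + A i)⁻¹ * (1 + A j)⁻¹ *
    ((1 - A i) * (1 - A j) + 2 * (M i o + M j o - M i j)) with hCdef
  have key : ∀ i j, 1 - C i j = (1 + A i)⁻¹ * (1 + A j)⁻¹ * (2 * (c + M i j)) := by
    intro i j
    have h1 := (hA0 i).ne'
    have h2 := (hA0 j).ne'
    simp only [hCdef]
    field_simp
    simp only [hA]
    ring
  have hlt : ∀ i j, C i j < 1 := by
    intro i j
    have h1 := hA0 i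
    have h2 := hA0 j
    have h3 := hn i j
    have : 0 < 1 - C i j := by rw [key]; positivity
    linarith
  have habs : ∀ i j, |C i j| < 1 := by
    intro i j
    rw [abs_lt]
    refine ⟨?_, hlt i j⟩
    have := hC.two i j
    linarith [hlt i i, hlt j j]
  have hI := ((rpsd_rank_one (fun i => (1 + A i)⁻¹)).mul (hC.inv_one_sub habs)).smul
    (t := 2) (by norm_num)
  convert hI using 3 with i j
  rw [key]
  have h1 := (hA0 i).ne'
  have h2 := (hA0 j).ne'
  have h3 : c + M i j ≠ 0 := by have := hn i j; positivity
  field_simp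

lemma sq_cnd {E ι : Type*} [NormedAddCommGroup E] [InnerProductSpace ℝ E] [Fintype ι]
    (x : ι → E) : RCnd (fun i j => ‖x i - x j‖ ^ 2) := by
  refine ⟨fun i j => by beta_reduce; rw [norm_sub_rev], fun i => by simp, fun i j => by positivity, ?_⟩
  intro a ha
  have e : ∑ i, ∑ j, a i * ‖x i - x j‖ ^ 2 * a j =
      (∑ i, a i * ‖x i‖ ^ 2) * (∑ j, a j) + (∑ i, a i) * (∑ j, a j * ‖x j‖ ^ 2)
      - 2 * inner ℝ (∑ i, a i • x i) (∑ j, a j • x j) := by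
    rw [Finset.sum_mul_sum, Finset.sum_mul_sum, sum_inner, Finset.mul_sum,
      ← Finset.sum_add_distrib, ← Finset.sum_sub_distrib]
    refine Finset.sum_congr rfl fun i _ => ?_
    rw [inner_sum, Finset.mul_sum, ← Finset.sum_add_distrib, ← Finset.sum_sub_distrib]
    refine Finset.sum_congr rfl fun j _ => ?_
    rw [real_inner_smul_left, real_inner_smul_right, norm_sub_sq_real]
    ring
  rw [e, ha]
  have := real_inner_self_nonneg (x := ∑ i, a i • x i)
  linarith

lemma integrable_aux (r : ℝ) (hr : 0 ≤ r) :
    MeasureTheory.Integrable (fun u : ℝ => r ^ 2 / (u ^ 2 + r ^ 2)) ∧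
    ∫ u : ℝ, r ^ 2 / (u ^ 2 + r ^ 2) = Real.pi * r := by
  rcases hr.eq_or_lt with rfl | hr
  · simp
  have e : (fun u : ℝ => r ^ 2 / (u ^ 2 + r ^ 2)) = fun u => (1 + (u / r) ^ 2)⁻¹ := by
    ext u
    have : u ^ 2 + r ^ 2 ≠ 0 := by positivity
    have : 1 + (u / r) ^ 2 ≠ 0 := by positivity
    field_simp
    ring
  rw [e]
  refine ⟨integrable_inv_one_add_sq.comp_div hr.ne', ?_⟩
  rw [MeasureTheory.Measure.integral_comp_div (fun u : ℝ => (1 + u ^ 2)⁻¹) r,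
    integral_univ_inv_one_add_sq, abs_of_pos hr, smul_eq_mul, mul_comm]

lemma norm_cnd {E ι : Type*} [NormedAddCommGroup E] [InnerProductSpace ℝ E] [Fintype ι]
    (x : ι → E) : RCnd (fun i j => ‖x i - x j‖) := by
  refine ⟨fun i j => by beta_reduce; rw [norm_sub_rev], fun i => by simp, fun i j => by positivity, ?_⟩
  intro a ha
  have hI := fun i j => (integrable_aux ‖x i - x j‖ (norm_nonneg _)).1
  have e : ∫ u : ℝ, ∑ i, ∑ j, a i * (‖x i - x j‖ ^ 2 / (u ^ 2 + ‖x i - x j‖ ^ 2)) * a j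
      = Real.pi * ∑ i, ∑ j, a i * ‖x i - x j‖ * a j := by
    rw [MeasureTheory.integral_finsetSum _ (fun i _ => MeasureTheory.integrable_finsetSum _
      fun j _ => ((hI i j).const_mul _).mul_const _), Finset.mul_sum]
    refine Finset.sum_congr rfl fun i _ => ?_
    rw [MeasureTheory.integral_finsetSum _ (fun j _ => ((hI i j).const_mul _).mul_const _),
      Finset.mul_sum]
    refine Finset.sum_congr rfl fun j _ => ?_
    rw [MeasureTheory.integral_mul_const, MeasureTheory.integral_const_mul,
      (integrable_aux ‖x i - x j‖ (norm_nonneg _)).2]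
    ring
  have hle : ∫ u : ℝ, ∑ i, ∑ j, a i * (‖x i - x j‖ ^ 2 / (u ^ 2 + ‖x i - x j‖ ^ 2)) * a j
      ≤ 0 := by
    apply MeasureTheory.integral_nonpos_of_ae
    filter_upwards [MeasureTheory.Measure.ae_ne MeasureTheory.volume (0 : ℝ)] with u hu
    have hu2 : 0 < u ^ 2 := by positivity
    have h := ((sq_cnd x).inv hu2).2 a
    have e2 : ∑ i, ∑ j, a i * (‖x i - x j‖ ^ 2 / (u ^ 2 + ‖x i - x j‖ ^ 2)) * a j =
        (∑ i, a i) * (∑ j, a j) - u ^ 2 * ∑ i, ∑ j, a i * (u ^ 2 + ‖x i - x j‖ ^ 2)⁻¹ * a j := by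
      rw [Finset.sum_mul_sum, Finset.mul_sum, ← Finset.sum_sub_distrib]
      refine Finset.sum_congr rfl fun i _ => ?_
      rw [Finset.mul_sum, ← Finset.sum_sub_distrib]
      refine Finset.sum_congr rfl fun j _ => ?_
      have : u ^ 2 + ‖x i - x j‖ ^ 2 ≠ 0 := by positivity
      field_simp
      ring
    show _ ≤ (0 : ℝ)
    rw [e2, ha]
    have := mul_nonneg hu2.le h
    linarith
  rw [e] at hle
  by_contra hcon
  push Not at hcon
  have := mul_pos Real.pi_pos hcon
  linarith

lemma complex_of_rpsd {ι : Type*} [Fintype ι] {M : ι → ι → ℝ} (hM : RPsd M) (c : ι → ℂ) :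
    (∑ j, ∑ i, (starRingEnd ℂ) (c i) * (M i j : ℂ) * c j).im = 0 ∧
    0 ≤ (∑ j, ∑ i, (starRingEnd ℂ) (c i) * (M i j : ℂ) * c j).re := by
  rw [Finset.sum_comm]
  constructor
  · have e : (∑ i, ∑ j, (starRingEnd ℂ) (c i) * (M i j : ℂ) * c j).im =
        ∑ i, ∑ j, (c i).re * M i j * (c j).im - ∑ i, ∑ j, (c i).im * M i j * (c j).re := by
      simp only [Complex.im_sum, ← Finset.sum_sub_distrib]
      refine Finset.sum_congr rfl fun i _ => Finset.sum_congr rfl fun j _ => ?_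
      simp
      ring
    rw [e, Finset.sum_comm, sub_eq_zero]
    refine Finset.sum_congr rfl fun i _ => Finset.sum_congr rfl fun j _ => ?_
    rw [hM.1 i j]; ring
  · have e : (∑ i, ∑ j, (starRingEnd ℂ) (c i) * (M i j : ℂ) * c j).re =
        ∑ i, ∑ j, (c i).re * M i j * (c j).re + ∑ i, ∑ j, (c i).im * M i j * (c j).im := by
      simp only [Complex.re_sum, ← Finset.sum_add_distrib]
      refine Finset.sum_congr rfl fun i _ => Finset.sum_congr rfl fun j _ => ?_
      simp
    rw [e]
    exact add_nonneg (hM.2 _) (hM.2 _)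

theorem inv_one_add_dist_positive_definite (n : ℕ) :
    IsPositiveDefiniteKernelR
      (fun x y : EuclideanSpace ℂ (Fin n) => 1 / (1 + ‖x - y‖)) := by
  intro N x c
  letI : InnerProductSpace ℝ (EuclideanSpace ℂ (Fin n)) := InnerProductSpace.rclikeToReal ℂ _
  have h := (norm_cnd x).inv one_pos
  simpa only [one_div] using complex_of_rpsd h c
end
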